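/- Let {e₁,e₂,e₃} be the standard orthonormal basis of V = ℝ³ and suppose (K,S) is in Z₃-canonical form with parameters (λ,μ,a,b), where either λ > 0, μ > 0 and μ ≠ √2·λ, or μ = √2·λ > 0 and a ≠ b. Then the stabilizer of (K,S) in SO(3) is exactly the order-3 subgroup {id, R₁, R₁²} generated by the rotation R₁ by angle 2π/3 about e₁. -/

import Mathlib

/-!
Everything is done in coordinates.  Write `v = g e₁ = (x, y, z)`.  Equivariance of `K` gives
`K(v,v) = 2λ v`, whose first component together with `|v| = 1` reads `3x² - 1 = 2x`, so `x = 1`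
or `x = -1/3`.  In the second case the other two components force `μ² = 2λ²`; so if `μ ≠ √2 λ`
then `v = e₁`.  If `μ = √2 λ` and `a ≠ b`, then `S v = a v` makes `v` a multiple of `e₁`, and
again `x = 1` (`first_column`).

Once `g` fixes `e₁`, orthogonality and `det g = 1` make it a rotation of the `e₂e₃`-plane with
`g e₂ = q e₂ + r e₃`, and equivariance of `K` at `(e₂, e₂)` is `(q + ir)² = q - ir`, i.e.
`(q + ir)³ = 1`.  These equations describe exactly `{id, R₁, R₁²}` (`mem_z3MatSet_iff`), and they
are also what is needed for the converse.
-/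

/-!
Setting (affine hypersurfaces admitting a pointwise symmetry, algebraic part):
`V₃ = ℝ³` with its standard inner product `h = ⟪·,·⟫`.  `K` is a symmetric bilinear
map `V₃ × V₃ → V₃` whose cubic form `h(K(X,Y),Z)` is totally symmetric and which
satisfies the apolarity condition (`K_X` trace-free), `S` is an `h`-symmetric
endomorphism.  `stab K S` is the stabilizer of the pair `(K,S)` inside `SO(3)`.
-/

noncomputable section

open scoped RealInnerProductSpace

/-- The 3-dimensional Euclidean space `ℝ³` with its standard inner product. -/
abbrev V₃ := EuclideanSpace ℝ (Fin 3)

/-- A symmetric bilinear map `K` is admissible (a difference tensor) if the cubic form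
`(X,Y,Z) ↦ ⟪K X Y, Z⟫` is totally symmetric and `K_X := K X ·` is trace-free for all `X`. -/
def IsAdmissibleK (K : V₃ →ₗ[ℝ] V₃ →ₗ[ℝ] V₃) : Prop :=
  (∀ X Y, K X Y = K Y X) ∧
  (∀ X Y Z, ⟪K X Y, Z⟫ = ⟪K X Z, Y⟫) ∧
  (∀ X, LinearMap.trace ℝ V₃ (K X) = 0)

/-- `S` is a symmetric endomorphism with respect to the inner product. -/
def IsSymmEndo (S : V₃ →ₗ[ℝ] V₃) : Prop := ∀ X Y, ⟪S X, Y⟫ = ⟪X, S Y⟫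

/-- The stabilizer of the pair `(K,S)` inside `SO(3)`: all orientation-preserving
(i.e. determinant `1`) linear isometries `g` of `ℝ³` with `K(gX,gY) = g(K(X,Y))`
and `S(gX) = g(SX)` for all `X, Y`. -/
def stab (K : V₃ →ₗ[ℝ] V₃ →ₗ[ℝ] V₃) (S : V₃ →ₗ[ℝ] V₃) : Set (V₃ ≃ₗᵢ[ℝ] V₃) :=
  {g | LinearMap.det (g.toLinearEquiv : V₃ →ₗ[ℝ] V₃) = 1 ∧
    (∀ X Y, K (g X) (g Y) = g (K X Y)) ∧ (∀ X, S (g X) = g (S X))}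

/-- The matrix of `g` with respect to the orthonormal basis `e`: column `j` consists of
the coordinates of `g (e j)` in the basis `e`. -/
def matrixOf (e : OrthonormalBasis (Fin 3) ℝ V₃) (g : V₃ ≃ₗᵢ[ℝ] V₃) :
    Matrix (Fin 3) (Fin 3) ℝ :=
  Matrix.of fun i j => ⟪e i, g (e j)⟫

/-- The standard orthonormal basis `{e₁, e₂, e₃}` of `ℝ³`. -/
def stdB : OrthonormalBasis (Fin 3) ℝ V₃ := EuclideanSpace.basisFun (Fin 3) ℝ

/-- Matrix of the rotation by angle `θ` about the first basis vector `e₁`. -/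
def rotMat (θ : ℝ) : Matrix (Fin 3) (Fin 3) ℝ :=
  !![1, 0, 0; 0, Real.cos θ, -Real.sin θ; 0, Real.sin θ, Real.cos θ]

/-- Matrix of the rotation by angle `π` about the axis `cos (θ/2) e₂ + sin (θ/2) e₃`
in the plane orthogonal to `e₁`. -/
def flipMat (θ : ℝ) : Matrix (Fin 3) (Fin 3) ℝ :=
  !![-1, 0, 0; 0, Real.cos θ, Real.sin θ; 0, Real.sin θ, -Real.cos θ]

/-- The set of all rotations about the axis `e 0` (the first vector of the basis `e`). -/
def rotSet (e : OrthonormalBasis (Fin 3) ℝ V₃) : Set (V₃ ≃ₗᵢ[ℝ] V₃) :=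
  {g | ∃ θ : ℝ, matrixOf e g = rotMat θ}

/-- The set of all rotations by angle `π` about axes orthogonal to `e 0`. -/
def flipSet (e : OrthonormalBasis (Fin 3) ℝ V₃) : Set (V₃ ≃ₗᵢ[ℝ] V₃) :=
  {g | ∃ θ : ℝ, matrixOf e g = flipMat θ}

/-- The whole of `SO(3)`, as a set of linear isometries of `ℝ³`. -/
def so3Set : Set (V₃ ≃ₗᵢ[ℝ] V₃) :=
  {g | LinearMap.det (g.toLinearEquiv : V₃ →ₗ[ℝ] V₃) = 1}

/-- Matrix of `P₁`, the rotation by angle `π` about `e₁`. -/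
def P1mat : Matrix (Fin 3) (Fin 3) ℝ := !![1, 0, 0; 0, -1, 0; 0, 0, -1]

/-- Matrix of `P₂`, the rotation by angle `π` about `e₂`. -/
def P2mat : Matrix (Fin 3) (Fin 3) ℝ := !![-1, 0, 0; 0, 1, 0; 0, 0, -1]

/-- Matrix of `P₃`, the rotation by angle `π` about `e₃`. -/
def P3mat : Matrix (Fin 3) (Fin 3) ℝ := !![-1, 0, 0; 0, -1, 0; 0, 0, 1]

/-- Matrix of `R₁`, the rotation by angle `2π/3` about `e₁`. -/
def R1mat : Matrix (Fin 3) (Fin 3) ℝ :=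
  !![1, 0, 0; 0, -(1/2), -(Real.sqrt 3/2); 0, Real.sqrt 3/2, -(1/2)]

/-- Matrix of `R₃`, the rotation by angle `2π/3` about `e₃`. -/
def R3mat : Matrix (Fin 3) (Fin 3) ℝ :=
  !![-(1/2), -(Real.sqrt 3/2), 0; Real.sqrt 3/2, -(1/2), 0; 0, 0, 1]

/-- Matrix of `Q`, the rotation by angle `2π/3` about the axis `e₁ + e₂ + e₃`
(the cyclic permutation `e₁ ↦ e₂ ↦ e₃ ↦ e₁`). -/
def Qmat : Matrix (Fin 3) (Fin 3) ℝ := !![0, 0, 1; 1, 0, 0; 0, 1, 0]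

/-- The matrices of the Klein four-group `{id, P₁, P₂, P₃} ≅ Z₂ × Z₂`. -/
def kleinMatSet : Set (Matrix (Fin 3) (Fin 3) ℝ) := {1, P1mat, P2mat, P3mat}

/-- The matrices of the order-6 group `⟨P₁, R₃⟩ ≅ S₃`. -/
def s3MatSet : Set (Matrix (Fin 3) (Fin 3) ℝ) :=
  {1, R3mat, R3mat * R3mat, P1mat, P1mat * R3mat, R3mat * P1mat}

/-- The matrices of the order-12 group `⟨P₁, P₂, Q⟩ ≅ A₄`. -/
def a4MatSet : Set (Matrix (Fin 3) (Fin 3) ℝ) :=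
  {1, P1mat, P2mat, P3mat, Qmat, Qmat * Qmat,
   P1mat * Qmat, P2mat * Qmat, P3mat * Qmat,
   Qmat * Qmat * P1mat, Qmat * Qmat * P2mat, Qmat * Qmat * P3mat}

/-- The matrices of the order-3 group `{id, R₁, R₁²} ≅ Z₃`. -/
def z3MatSet : Set (Matrix (Fin 3) (Fin 3) ℝ) := {1, R1mat, R1mat * R1mat}

/-- The matrices of the order-2 group `{id, P₁} ≅ Z₂`. -/
def z2MatSet : Set (Matrix (Fin 3) (Fin 3) ℝ) := {1, P1mat}

/-- The pair `(K,S)` is in `Z₂`-canonical form with parameters `(lam, mu, a, b, c, d)`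
with respect to the orthonormal basis `e`. -/
def Z2Form (K : V₃ →ₗ[ℝ] V₃ →ₗ[ℝ] V₃) (S : V₃ →ₗ[ℝ] V₃)
    (e : OrthonormalBasis (Fin 3) ℝ V₃) (lam mu a b c d : ℝ) : Prop :=
  K (e 0) (e 0) = (2*lam) • e 0 ∧
  K (e 0) (e 1) = (-lam) • e 1 + mu • e 2 ∧
  K (e 0) (e 2) = mu • e 1 + (-lam) • e 2 ∧
  K (e 1) (e 1) = (-lam) • e 0 ∧
  K (e 1) (e 2) = mu • e 0 ∧
  K (e 2) (e 2) = (-lam) • e 0 ∧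
  S (e 0) = a • e 0 ∧ S (e 1) = b • e 1 + d • e 2 ∧ S (e 2) = d • e 1 + c • e 2

/-- The pair `(K,S)` is in `Z₃`-canonical form with parameters `(lam, mu, a, b)`
with respect to the orthonormal basis `e`. -/
def Z3Form (K : V₃ →ₗ[ℝ] V₃ →ₗ[ℝ] V₃) (S : V₃ →ₗ[ℝ] V₃)
    (e : OrthonormalBasis (Fin 3) ℝ V₃) (lam mu a b : ℝ) : Prop :=
  K (e 0) (e 0) = (2*lam) • e 0 ∧
  K (e 0) (e 1) = (-lam) • e 1 ∧
  K (e 0) (e 2) = (-lam) • e 2 ∧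
  K (e 1) (e 1) = (-lam) • e 0 + mu • e 1 ∧
  K (e 1) (e 2) = (-mu) • e 2 ∧
  K (e 2) (e 2) = (-lam) • e 0 + (-mu) • e 1 ∧
  S (e 0) = a • e 0 ∧ S (e 1) = b • e 1 ∧ S (e 2) = b • e 2

/-- The pair `(K,S)` is in `SO(2)`-canonical form with parameters `(lam, a, b)`
with respect to the orthonormal basis `e`. -/
def SO2Form (K : V₃ →ₗ[ℝ] V₃ →ₗ[ℝ] V₃) (S : V₃ →ₗ[ℝ] V₃)
    (e : OrthonormalBasis (Fin 3) ℝ V₃) (lam a b : ℝ) : Prop :=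
  K (e 0) (e 0) = (2*lam) • e 0 ∧
  K (e 0) (e 1) = (-lam) • e 1 ∧
  K (e 0) (e 2) = (-lam) • e 2 ∧
  K (e 1) (e 1) = (-lam) • e 0 ∧
  K (e 1) (e 2) = 0 ∧
  K (e 2) (e 2) = (-lam) • e 0 ∧
  S (e 0) = a • e 0 ∧ S (e 1) = b • e 1 ∧ S (e 2) = b • e 2

/-- The pair `(K,S)` is in orthogonal-triple canonical form with parameters `(lam, a, b, c)`
with respect to the orthonormal basis `e`. -/
def OTForm (K : V₃ →ₗ[ℝ] V₃ →ₗ[ℝ] V₃) (S : V₃ →ₗ[ℝ] V₃)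
    (e : OrthonormalBasis (Fin 3) ℝ V₃) (lam a b c : ℝ) : Prop :=
  K (e 0) (e 0) = 0 ∧ K (e 1) (e 1) = 0 ∧ K (e 2) (e 2) = 0 ∧
  K (e 0) (e 1) = lam • e 2 ∧
  K (e 0) (e 2) = lam • e 1 ∧
  K (e 1) (e 2) = lam • e 0 ∧
  S (e 0) = a • e 0 ∧ S (e 1) = b • e 1 ∧ S (e 2) = c • e 2

/-- The pair `(K,S)` is in `S₃`-canonical form with parameters `(lam, a, b)`
with respect to the orthonormal basis `e`. -/
def S3Form (K : V₃ →ₗ[ℝ] V₃ →ₗ[ℝ] V₃) (S : V₃ →ₗ[ℝ] V₃)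
    (e : OrthonormalBasis (Fin 3) ℝ V₃) (lam a b : ℝ) : Prop :=
  K (e 0) (e 0) = lam • e 0 ∧
  K (e 0) (e 1) = (-lam) • e 1 ∧
  K (e 1) (e 1) = (-lam) • e 0 ∧
  K (e 0) (e 2) = 0 ∧ K (e 1) (e 2) = 0 ∧ K (e 2) (e 2) = 0 ∧
  S (e 0) = a • e 0 ∧ S (e 1) = a • e 1 ∧ S (e 2) = b • e 2

/-- The order-3 group as the rotations `q + ir` of the `e₂e₃`-plane with `|q + ir| = 1` and
`(q + ir)² = q - ir`. -/
lemma mem_z3MatSet_iff (M : Matrix (Fin 3) (Fin 3) ℝ) :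
    M ∈ z3MatSet ↔ ∃ q r : ℝ, M = !![1, 0, 0; 0, q, -r; 0, r, q] ∧
      q ^ 2 + r ^ 2 = 1 ∧ q ^ 2 - r ^ 2 = q ∧ -2 * (q * r) = r := by
  have h3 : Real.sqrt 3 ^ 2 = 3 := Real.sq_sqrt (by norm_num)
  have h1 : (1 : Matrix (Fin 3) (Fin 3) ℝ) = !![1, 0, 0; 0, 1, -0; 0, 0, 1] := by
    ext i j; fin_cases i <;> fin_cases j <;> simp
  have hRR : R1mat * R1mat = !![1, 0, 0; 0, -(1/2), -(-(Real.sqrt 3/2));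
      0, -(Real.sqrt 3/2), -(1/2)] := by
    ext i j
    fin_cases i <;> fin_cases j <;> simp [R1mat, Matrix.mul_apply, Fin.sum_univ_three] <;>
      nlinarith
  simp only [z3MatSet, Set.mem_insert_iff, Set.mem_singleton_iff]
  constructor
  · rintro (h | h | h)
    · exact ⟨1, 0, h.trans h1, by norm_num, by norm_num, by norm_num⟩
    · exact ⟨-(1/2), Real.sqrt 3/2, h, by nlinarith, by nlinarith, by ring⟩
    · exact ⟨-(1/2), -(Real.sqrt 3/2), h.trans hRR, by nlinarith, by nlinarith, by ring⟩
  · rintro ⟨q, r, h, e1, e2, e3⟩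
    by_cases hr : r = 0
    · subst hr
      obtain rfl : q = 1 := by nlinarith
      left; rw [h, h1]
    · have hq : q = -(1/2) := by
        have : r * (2 * q + 1) = 0 := by linarith
        rcases mul_eq_zero.1 this with h | h
        · exact absurd h hr
        · linarith
      subst hq
      have : (r - Real.sqrt 3/2) * (r + Real.sqrt 3/2) = 0 := by nlinarith
      rcases mul_eq_zero.1 this with h' | h'
      · obtain rfl : r = Real.sqrt 3/2 := by linarith
        right; left; exact h
      · obtain rfl : r = -(Real.sqrt 3/2) := by linarith
        right; right; rw [h, hRR]

lemma stdB_apply (i j : Fin 3) : stdB i j = if j = i then 1 else 0 := by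
  simp [stdB]

lemma matrixOf_stdB (g : V₃ ≃ₗᵢ[ℝ] V₃) (i j : Fin 3) : matrixOf stdB g i j = g (stdB j) i := by
  simp [matrixOf, stdB, EuclideanSpace.inner_single_left]

lemma expand (X : V₃) : X = X 0 • stdB 0 + X 1 • stdB 1 + X 2 • stdB 2 := by
  ext i; fin_cases i <;> simp [stdB_apply]

lemma g_apply (g : V₃ ≃ₗᵢ[ℝ] V₃) (X : V₃) (i : Fin 3) :
    g X i = matrixOf stdB g i 0 * X 0 + matrixOf stdB g i 1 * X 1 + matrixOf stdB g i 2 * X 2 := by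
  conv_lhs => rw [expand X]
  simp [matrixOf_stdB, mul_comm]

lemma det_eq (g : V₃ ≃ₗᵢ[ℝ] V₃) :
    LinearMap.det (g.toLinearEquiv : V₃ →ₗ[ℝ] V₃) = (matrixOf stdB g).det := by
  rw [← LinearMap.det_toMatrix stdB.toBasis]
  congr 1
  ext i j
  rw [matrixOf_stdB]
  simp [LinearMap.toMatrix_apply, stdB]

lemma inner_coords (X Y : V₃) : ⟪X, Y⟫ = X 0 * Y 0 + X 1 * Y 1 + X 2 * Y 2 := by
  simp [PiLp.inner_apply, Fin.sum_univ_three, mul_comm]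

lemma columns_orthonormal (g : V₃ ≃ₗᵢ[ℝ] V₃) (i j : Fin 3) :
    matrixOf stdB g 0 i * matrixOf stdB g 0 j + matrixOf stdB g 1 i * matrixOf stdB g 1 j
      + matrixOf stdB g 2 i * matrixOf stdB g 2 j = if i = j then 1 else 0 := by
  simp only [matrixOf_stdB]
  rw [← inner_coords, LinearIsometryEquiv.inner_map_map]
  exact orthonormal_iff_ite.1 stdB.orthonormal i j

lemma K_coords {K : V₃ →ₗ[ℝ] V₃ →ₗ[ℝ] V₃} {S : V₃ →ₗ[ℝ] V₃} (hK : IsAdmissibleK K)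
    {lam mu a b : ℝ} (hform : Z3Form K S stdB lam mu a b) (X Y : V₃) :
    K X Y 0 = lam * (2 * (X 0 * Y 0) - X 1 * Y 1 - X 2 * Y 2) ∧
    K X Y 1 = -lam * (X 0 * Y 1 + X 1 * Y 0) + mu * (X 1 * Y 1 - X 2 * Y 2) ∧
    K X Y 2 = -lam * (X 0 * Y 2 + X 2 * Y 0) - mu * (X 1 * Y 2 + X 2 * Y 1) := by
  obtain ⟨h00, h01, h02, h11, h12, h22, -⟩ := hform
  have h10 := (hK.1 (stdB 1) (stdB 0)).trans h01
  have h20 := (hK.1 (stdB 2) (stdB 0)).trans h02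
  have h21 := (hK.1 (stdB 2) (stdB 1)).trans h12
  have h : K X Y = K (X 0 • stdB 0 + X 1 • stdB 1 + X 2 • stdB 2)
      (Y 0 • stdB 0 + Y 1 • stdB 1 + Y 2 • stdB 2) := by
    rw [← expand X, ← expand Y]
  simp only [map_add, map_smul, LinearMap.add_apply, LinearMap.smul_apply,
    h00, h01, h02, h10, h11, h12, h20, h21, h22] at h
  rw [h]
  refine ⟨?_, ?_, ?_⟩ <;> simp [stdB_apply] <;> ring

lemma S_coords {K : V₃ →ₗ[ℝ] V₃ →ₗ[ℝ] V₃} {S : V₃ →ₗ[ℝ] V₃}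
    {lam mu a b : ℝ} (hform : Z3Form K S stdB lam mu a b) (X : V₃) :
    S X 0 = a * X 0 ∧ S X 1 = b * X 1 ∧ S X 2 = b * X 2 := by
  obtain ⟨-, -, -, -, -, -, h0, h1, h2⟩ := hform
  have h : S X = S (X 0 • stdB 0 + X 1 • stdB 1 + X 2 • stdB 2) := by rw [← expand X]
  simp only [map_add, map_smul, h0, h1, h2] at h
  rw [h]
  refine ⟨?_, ?_, ?_⟩ <;> simp [stdB_apply] <;> ring

/-- A unit vector `v = (x, y, z)` with `K(v,v) = 2λ v` and `S v = a v` is `e₁`. -/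
lemma first_column {lam mu a b x y z : ℝ}
    (hcond : (0 < lam ∧ 0 < mu ∧ mu ≠ Real.sqrt 2 * lam) ∨
             (mu = Real.sqrt 2 * lam ∧ 0 < mu ∧ a ≠ b))
    (hn : x ^ 2 + y ^ 2 + z ^ 2 = 1)
    (k0 : lam * (2 * x ^ 2 - y ^ 2 - z ^ 2) = 2 * lam * x)
    (k1 : -lam * (2 * (x * y)) + mu * (y ^ 2 - z ^ 2) = 2 * lam * y)
    (k2 : -lam * (2 * (x * z)) - mu * (2 * (y * z)) = 2 * lam * z)
    (s1 : b * y = a * y) (s2 : b * z = a * z) : x = 1 ∧ y = 0 ∧ z = 0 := by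
  have hs2 : Real.sqrt 2 ^ 2 = 2 := Real.sq_sqrt (by norm_num)
  have hs0 : 0 < Real.sqrt 2 := Real.sqrt_pos.2 (by norm_num)
  have hl : 0 < lam := by
    rcases hcond with h | ⟨h, h', -⟩
    · exact h.1
    · exact (mul_pos_iff_of_pos_left hs0).1 (h ▸ h')
  have hx : (x - 1) * (3 * x + 1) = 0 := by
    have : lam * ((x - 1) * (3 * x + 1)) = 0 := by linear_combination k0 + lam * hn
    exact (mul_eq_zero.1 this).resolve_left hl.ne'
  rcases mul_eq_zero.1 hx with h | h
  · obtain rfl : x = 1 := by linarith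
    exact ⟨rfl, by nlinarith, by nlinarith⟩
  · exfalso
    obtain rfl : x = -(1/3) := by linarith
    rcases hcond with ⟨-, hm, hne⟩ | ⟨-, -, hab⟩
    · -- Either `z = 0` or `z² = 3y²`; both lead to `μ² = 2λ²`.
      have key : mu ^ 2 = 2 * lam ^ 2 := by
        by_cases hz : z = 0
        · subst hz
          have hy : y ≠ 0 := by rintro rfl; norm_num at hn
          have : mu * y = 4/3 * lam := by
            apply mul_right_cancel₀ hy; linarith
          have h2 : mu ^ 2 * y ^ 2 = 16/9 * lam ^ 2 := by
            rw [← mul_pow, this]; ring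
          have : y ^ 2 = 8/9 := by linarith
          rw [this] at h2; linarith
        · have h1 : mu * y = -(2/3) * lam := by
            apply mul_right_cancel₀ hz; linarith
          have hzy : mu * (z ^ 2 - 3 * y ^ 2) = 0 := by
            linear_combination -k1 - 2 * y * h1
          have hzy := (mul_eq_zero.1 hzy).resolve_left hm.ne'
          have hy : y ^ 2 = 2/9 := by linarith
          have h2 : mu ^ 2 * y ^ 2 = 4/9 * lam ^ 2 := by
            rw [← mul_pow, h1]; ring
          rw [hy] at h2; linarith
      apply hne
      rw [← sq_eq_sq₀ hm.le (by positivity), mul_pow, hs2, key]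
    · have hba : b - a ≠ 0 := sub_ne_zero.2 hab.symm
      have hy : y = 0 := (mul_eq_zero.1 (by linarith : (b - a) * y = 0)).resolve_left hba
      have hz : z = 0 := (mul_eq_zero.1 (by linarith : (b - a) * z = 0)).resolve_left hba
      subst hy hz
      norm_num at hn

/-- if `(K,S)` is in `Z₃`-canonical form with parameters `(λ,μ,a,b)`,
where either `λ > 0`, `μ > 0` and `μ ≠ √2 λ`, or `μ = √2 λ > 0` and `a ≠ b`, then the
stabilizer of `(K,S)` in `SO(3)` is exactly the order-3 subgroup `{id, R₁, R₁²}`. -/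
theorem statement_12 (K : V₃ →ₗ[ℝ] V₃ →ₗ[ℝ] V₃) (S : V₃ →ₗ[ℝ] V₃)
    (hK : IsAdmissibleK K) (hS : IsSymmEndo S)
    (lam mu a b : ℝ) (hform : Z3Form K S stdB lam mu a b)
    (hcond : (0 < lam ∧ 0 < mu ∧ mu ≠ Real.sqrt 2 * lam) ∨
             (mu = Real.sqrt 2 * lam ∧ 0 < mu ∧ a ≠ b)) :
    stab K S = {g | matrixOf stdB g ∈ z3MatSet} := by
  ext g
  simp only [stab, Set.mem_ofPred_eq, mem_z3MatSet_iff, det_eq]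
  have hKc := K_coords hK hform
  have hSc := S_coords hform
  have hg := g_apply g
  have hcol := columns_orthonormal g
  have hM := matrixOf_stdB g
  generalize matrixOf stdB g = M at *
  constructor
  · rintro ⟨hdet, hgK, hgS⟩
    have hm : 0 < mu := by rcases hcond with h | h <;> exact h.2.1
    have n00 := hcol 0 0
    have n01 := hcol 0 1
    have n02 := hcol 0 2
    have n11 := hcol 1 1
    have n12 := hcol 1 2
    simp only [if_true, Fin.reduceEq, if_false] at n00 n01 n02 n11 n12
    obtain ⟨k0, k1, k2⟩ := hKc (g (stdB 0)) (g (stdB 0))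
    obtain ⟨-, s1, s2⟩ := hSc (g (stdB 0))
    rw [hgK, hform.1, map_smul] at k0 k1 k2
    rw [hgS, hform.2.2.2.2.2.2.1, map_smul] at s1 s2
    simp only [PiLp.smul_apply, smul_eq_mul, ← hM] at k0 k1 k2 s1 s2
    obtain ⟨hx, hy, hz⟩ := first_column (x := M 0 0) (y := M 1 0) (z := M 2 0) hcond
      (by linarith) (by linarith) (by linarith) (by linarith) s1.symm s2.symm
    rw [hx, hy, hz] at n01 n02
    have h01 : M 0 1 = 0 := by linarith
    have h02 : M 0 2 = 0 := by linarith
    rw [h01] at n11 n12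
    rw [Matrix.det_fin_three, hx, hy, hz, h01, h02] at hdet
    obtain ⟨-, l1, l2⟩ := hKc (g (stdB 1)) (g (stdB 1))
    rw [hgK, hform.2.2.2.1, map_add, map_smul, map_smul] at l1 l2
    simp only [PiLp.add_apply, PiLp.smul_apply, smul_eq_mul, ← hM, hy, hz, h01] at l1 l2
    -- Cramer's rule for the second and third columns.
    have h22 : M 2 2 = M 1 1 := by
      linear_combination M 1 1 * hdet + M 2 1 * n12 - M 2 2 * n11
    have h12 : M 1 2 = -M 2 1 := by
      linear_combination -M 2 1 * hdet + M 1 1 * n12 - M 1 2 * n11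
    refine ⟨M 1 1, M 2 1, ?_, by linarith, ?_, ?_⟩
    · ext i j
      fin_cases i <;> fin_cases j <;> simp [hx, hy, hz, h01, h02, h22, h12]
    · apply mul_left_cancel₀ hm.ne'; linarith
    · apply mul_left_cancel₀ hm.ne'; linarith
  · rintro ⟨q, r, rfl, e1, e2, e3⟩
    have hg0 : ∀ X, g X 0 = X 0 := fun X => by simpa using hg X 0
    have hg1 : ∀ X, g X 1 = q * X 1 - r * X 2 := fun X => by
      have := hg X 1
      simp at this; linarith
    have hg2 : ∀ X, g X 2 = r * X 1 + q * X 2 := fun X => by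
      have := hg X 2
      simp at this; linarith
    refine ⟨?_, fun X Y => ?_, fun X => ?_⟩
    · rw [Matrix.det_fin_three]; simp; linarith
    · obtain ⟨a0, a1, a2⟩ := hKc (g X) (g Y)
      obtain ⟨b0, b1, b2⟩ := hKc X Y
      ext i
      fin_cases i
      · simp only [Fin.zero_eta, hg0, a0, b0, hg1, hg2]
        linear_combination -lam * (X 1 * Y 1 + X 2 * Y 2) * e1
      · simp only [Fin.mk_one, hg0, a1, b1, b2, hg1, hg2]
        linear_combination mu * (X 1 * Y 1 - X 2 * Y 2) * e2 + mu * (X 1 * Y 2 + X 2 * Y 1) * e3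
      · simp only [Fin.reduceFinMk, hg0, a2, b1, b2, hg1, hg2]
        linear_combination mu * (X 1 * Y 1 - X 2 * Y 2) * e3 - mu * (X 1 * Y 2 + X 2 * Y 1) * e2
    · obtain ⟨a0, a1, a2⟩ := hSc (g X)
      obtain ⟨b0, b1, b2⟩ := hSc X
      ext i
      fin_cases i
      · simp only [Fin.zero_eta, hg0, a0, b0]
      · simp only [Fin.mk_one, a1, b1, b2, hg1]; ring
      · simp only [Fin.reduceFinMk, a2, b1, b2, hg2]; ring
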